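/- Suppose Z ≤ 1/e and n ≥ max{8e, 16·log(1/Z)}. Let b_1, …, b_T be any real sequence with |b_t| ≤ μ for some 0 < μ ≤ 1, and let x_1, …, x_{T+1} be the deviations produced by DNP-cu. Then for every s ∈ [1, T], writing τ = s, the cumulative reward over the interval [1, s] satisfies Σ_{t=1}^{s} ( g(x_t)·b_t − (1/μ)·|g(x_t) − g(x_{t+1})| ) ≥ max( 0, Σ_{t=1}^{s} b_t − (τ/n)·(U(n) + 2μ) − U(n) ) − Z·τ. -/

import Mathlib

/-- The Gauss error function `erf(x) = (2/√π) ∫₀ˣ e^{−s²} ds`. -/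
noncomputable def erf (x : ℝ) : ℝ :=
  (2 / Real.sqrt Real.pi) * ∫ s in (0:ℝ)..x, Real.exp (-s ^ 2)

/-- The unclipped confidence function `g̃(x) = √(n/8) · Z · erf(x/√(8n)) · e^{x²/(16n)}`. -/
noncomputable def gtilde (n Z x : ℝ) : ℝ :=
  Real.sqrt (n / 8) * Z * erf (x / Real.sqrt (8 * n)) * Real.exp (x ^ 2 / (16 * n))

/-- The confidence function `g(x)`, the projection of `g̃(x)` onto `[0,1]`. -/
noncomputable def gconf (n Z x : ℝ) : ℝ := min (max (gtilde n Z x) 0) 1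

/-!
Follow the potential `Φ(x) = ∫₀ˣ g`. Let a round move the deviation from `x` to
`y = x - x / n + c`, where `c` is the part of the bit that DNP-cu keeps. Then `g(x) c` equals
`Φ(y) - Φ(x)` plus the decay term `x g(x) / n` minus the Bregman divergence of `Φ`. By the
differential equation `g̃' = (Z / (4√π)) e^{-x²/(16n)} + x g̃ / (8n)`, the function `g` is so flat
that the decay term pays for the divergence and the movement cost up to `Z`. A discarded bit is
nonpositive where `g = 0` and nonnegative where `g = 1`, so discarding it harms neither bound.
Telescoping `Φ`, with `Φ(x) ≥ max(0, x - U)`, finishes the proof.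
-/

open Finset

lemma hasDerivAt_erf (x : ℝ) : HasDerivAt erf (2 / √Real.pi * Real.exp (-x ^ 2)) x := by
  have hc : Continuous fun s : ℝ ↦ Real.exp (-s ^ 2) := by fun_prop
  exact (intervalIntegral.integral_hasDerivAt_right (hc.intervalIntegrable 0 x)
    (hc.stronglyMeasurableAtFilter _ _) hc.continuousAt).const_mul _

lemma erf_monotone : Monotone erf :=
  monotone_of_hasDerivAt_nonneg hasDerivAt_erf fun x ↦ by positivity

lemma erf_zero : erf 0 = 0 := by simp [erf]

lemma erf_nonneg {x : ℝ} (hx : 0 ≤ x) : 0 ≤ erf x := erf_zero ▸ erf_monotone hx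

lemma erf_nonpos {x : ℝ} (hx : x ≤ 0) : erf x ≤ 0 := erf_zero ▸ erf_monotone hx

section UnclippedConfidence

variable {n Z x : ℝ}

lemma gtilde_nonneg (hZ : 0 ≤ Z) (hx : 0 ≤ x) : 0 ≤ gtilde n Z x := by
  have := erf_nonneg (div_nonneg hx (Real.sqrt_nonneg (8 * n)))
  unfold gtilde
  positivity

lemma gtilde_nonpos (hZ : 0 ≤ Z) (hx : x ≤ 0) : gtilde n Z x ≤ 0 := by
  have := erf_nonpos (div_nonpos_of_nonpos_of_nonneg hx (Real.sqrt_nonneg (8 * n)))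
  exact mul_nonpos_of_nonpos_of_nonneg (mul_nonpos_of_nonneg_of_nonpos (by positivity) this)
    (Real.exp_pos _).le

lemma gtilde_zero (n Z : ℝ) : gtilde n Z 0 = 0 := by simp [gtilde, erf_zero]

lemma hasDerivAt_gtilde (hn : 0 < n) (Z x : ℝ) :
    HasDerivAt (gtilde n Z)
      (Z / (4 * √Real.pi) * Real.exp (-(x ^ 2 / (16 * n))) + x * gtilde n Z x / (8 * n)) x := by
  have herf : HasDerivAt (fun x : ℝ ↦ erf (x / √(8 * n)))
      (2 / √Real.pi * Real.exp (-(x / √(8 * n)) ^ 2) * (1 / √(8 * n))) x :=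
    (hasDerivAt_erf _).comp x ((hasDerivAt_id x).div_const _)
  have hexp : HasDerivAt (fun x : ℝ ↦ Real.exp (x ^ 2 / (16 * n)))
      (Real.exp (x ^ 2 / (16 * n)) * (2 * x / (16 * n))) x := by
    simpa using ((hasDerivAt_pow 2 x).div_const (16 * n)).exp
  have hexp_mul : Real.exp (-(x / √(8 * n)) ^ 2) * Real.exp (x ^ 2 / (16 * n))
      = Real.exp (-(x ^ 2 / (16 * n))) := by
    rw [← Real.exp_add, div_pow, Real.sq_sqrt (by positivity)]
    congr 1
    field_simp
    ring
  have hsqrt : √(n / 8) = √(8 * n) / 8 := by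
    rw [show n / 8 = (8 * n) / 8 ^ 2 by ring, Real.sqrt_div (by positivity),
      Real.sqrt_sq (by norm_num)]
  have hsqrt_ne : √(8 * n) ≠ 0 := by positivity
  refine ((herf.const_mul (√(n / 8) * Z)).mul hexp).congr_deriv ?_
  rw [← hexp_mul, gtilde, hsqrt]
  field_simp
  ring

lemma gtilde_monotoneOn (hn : 0 < n) (hZ : 0 ≤ Z) : MonotoneOn (gtilde n Z) (Set.Ici 0) := by
  refine monotoneOn_of_hasDerivWithinAt_nonneg (convex_Ici 0)
    (fun x _ ↦ (hasDerivAt_gtilde hn Z x).continuousAt.continuousWithinAt)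
    (fun x _ ↦ (hasDerivAt_gtilde hn Z x).hasDerivWithinAt) fun x hx ↦ ?_
  have hx0 : 0 ≤ x := interior_subset hx
  have := gtilde_nonneg (n := n) hZ hx0
  positivity

lemma deriv_gtilde_le (hn : 0 < n) (hZ : 0 ≤ Z) (hx : 0 ≤ x) :
    deriv (gtilde n Z) x ≤ (Z + x * gtilde n Z x / n) / 6 := by
  have hexp : Real.exp (-(x ^ 2 / (16 * n))) ≤ 1 :=
    Real.exp_le_one_iff.2 (neg_nonpos.2 (by positivity))
  have hpi : 3 / 2 ≤ √Real.pi := Real.le_sqrt_of_sq_le (by linarith [Real.pi_gt_three])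
  have hgauss : Z / (4 * √Real.pi) * Real.exp (-(x ^ 2 / (16 * n))) ≤ Z / 6 * 1 := by
    gcongr
    linarith
  have hgrowth : 0 ≤ x * gtilde n Z x / n := by
    have := gtilde_nonneg (n := n) hZ hx
    positivity
  have hsplit : x * gtilde n Z x / (8 * n) = x * gtilde n Z x / n / 8 := by ring
  rw [(hasDerivAt_gtilde hn Z x).deriv, hsplit]
  linarith

lemma gtilde_sub_le {u v : ℝ} (hn : 0 < n) (hZ : 0 ≤ Z) (hu : 0 ≤ u) (huv : u ≤ v) :
    gtilde n Z v - gtilde n Z u ≤ (Z + v * gtilde n Z v / n) / 6 * (v - u) := by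
  refine (convex_Icc u v).image_sub_le_mul_sub_of_deriv_le
    (fun x _ ↦ (hasDerivAt_gtilde hn Z x).continuousAt.continuousWithinAt)
    (fun x _ ↦ (hasDerivAt_gtilde hn Z x).differentiableAt.differentiableWithinAt)
    (fun w hw ↦ ?_) u ⟨le_rfl, huv⟩ v ⟨huv, le_rfl⟩ huv
  obtain ⟨huw, hwv⟩ := interior_subset hw
  have hw0 : 0 ≤ w := hu.trans huw
  have := gtilde_nonneg (n := n) hZ hw0
  have hv0 : 0 ≤ v := hu.trans huv
  have := gtilde_monotoneOn hn hZ hw0 hv0 hwv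
  refine (deriv_gtilde_le hn hZ hw0).trans ?_
  gcongr

end UnclippedConfidence

section ConfidenceFunction

/-- A confidence function with window `[0, U]`: it rises from `0` to `1` on the window, and its
slope at `v` is at most `(Z + v g(v) / n) / 6`. The last field says so in integrated form, since `g`
may have corners at the ends of the window. The constant `6` is the factor `k * (k + 1)` of
`roundLoss_le` for a round that moves the deviation by up to `2 * μ`. -/
structure IsConfidenceFunction (n Z U : ℝ) (g : ℝ → ℝ) : Prop where
  monotone : Monotone g
  eq_zero : ∀ ⦃x⦄, x ≤ 0 → g x = 0
  eq_one : ∀ ⦃x⦄, U ≤ x → g x = 1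
  sub_le : ∀ ⦃u v⦄, u ≤ v → g v - g u ≤ (Z + v * g v / n) / 6 * (v - u)

variable {n Z U : ℝ}

lemma pos_of_gtilde_eq_one (hZ : 0 ≤ Z) (hU : gtilde n Z U = 1) : 0 < U := by
  by_contra! hU0
  linarith [gtilde_nonpos (n := n) hZ hU0]

lemma gconf_eq_gtilde_projIcc (hn : 0 < n) (hZ : 0 ≤ Z) (hU0 : 0 ≤ U) (hU : gtilde n Z U = 1)
    (x : ℝ) : gconf n Z x = gtilde n Z (Set.projIcc 0 U hU0 x) := by
  rcases le_total x 0 with hx | hx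
  · rw [Set.projIcc_of_le_left _ hx, gconf, gtilde_zero, max_eq_right (gtilde_nonpos hZ hx),
      min_eq_left zero_le_one]
  have hpos : max (gtilde n Z x) 0 = gtilde n Z x := max_eq_left (gtilde_nonneg hZ hx)
  rcases le_total x U with hxU | hxU
  · have := gtilde_monotoneOn hn hZ hx hU0 hxU
    rw [Set.projIcc_of_mem _ ⟨hx, hxU⟩, gconf, hpos, min_eq_left (hU ▸ this)]
  · have := gtilde_monotoneOn hn hZ hU0 hx hxU
    rw [Set.projIcc_of_right_le _ hxU, gconf, hpos, min_eq_right (hU ▸ this), hU]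

theorem isConfidenceFunction_gconf (hn : 0 < n) (hZ : 0 ≤ Z) (hU : gtilde n Z U = 1) :
    IsConfidenceFunction n Z U (gconf n Z) := by
  have hU0 : 0 ≤ U := (pos_of_gtilde_eq_one hZ hU).le
  have hproj := gconf_eq_gtilde_projIcc hn hZ hU0 hU
  refine ⟨fun u v huv ↦ ?_, fun x hx ↦ ?_, fun x hx ↦ ?_, fun u v huv ↦ ?_⟩
  · rw [hproj, hproj]
    exact gtilde_monotoneOn hn hZ (Set.projIcc 0 U hU0 u).2.1 (Set.projIcc 0 U hU0 v).2.1
      (Set.monotone_projIcc hU0 huv)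
  · rw [hproj, Set.projIcc_of_le_left _ hx, gtilde_zero]
  · rw [hproj, Set.projIcc_of_right_le _ hx, hU]
  · set u' := Set.projIcc 0 U hU0 u
    set v' := Set.projIcc 0 U hU0 v
    have huv' : (u' : ℝ) ≤ v' := Set.monotone_projIcc hU0 huv
    have hg0 : 0 ≤ gtilde n Z v' := gtilde_nonneg hZ v'.2.1
    have hdist : (v' - u' : ℝ) ≤ v - u := by
      simpa only [abs_of_nonneg (sub_nonneg.2 huv)]
        using (le_abs_self _).trans (Set.abs_projIcc_sub_projIcc hU0 (c := v) (d := u))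
    have hmul : v' * gtilde n Z v' ≤ v * gtilde n Z v' := by
      rcases le_total v 0 with hv | hv
      · simp only [v', Set.projIcc_of_le_left _ hv, gtilde_zero, mul_zero, le_refl]
      · exact mul_le_mul_of_nonneg_right (max_le hv (min_le_right _ _)) hg0
    have hslope : 0 ≤ (Z + v' * gtilde n Z v' / n) / 6 := by
      have := v'.2.1
      positivity
    rw [hproj, hproj]
    calc gtilde n Z v' - gtilde n Z u'
        ≤ (Z + v' * gtilde n Z v' / n) / 6 * (v' - u') := gtilde_sub_le hn hZ u'.2.1 huv'
      _ ≤ (Z + v' * gtilde n Z v' / n) / 6 * (v - u) := by gcongr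
      _ ≤ (Z + v * gtilde n Z v' / n) / 6 * (v - u) := by
        have := sub_nonneg.2 huv
        gcongr

end ConfidenceFunction

section Potential

/-- The potential `Φ(x) = ∫₀ˣ g` of a confidence function `g`. -/
noncomputable def confidencePotential (g : ℝ → ℝ) (x : ℝ) : ℝ := ∫ s in (0 : ℝ)..x, g s

/-- The loss of a round that moves the deviation from `x` to `y`: the Bregman divergence
`Φ(y) - Φ(x) - g(x) (y - x)` of the potential plus the movement cost of `g`. -/
noncomputable def roundLoss (g : ℝ → ℝ) (μ x y : ℝ) : ℝ :=
  confidencePotential g y - confidencePotential g x - g x * (y - x) + (1 / μ) * |g x - g y|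

variable {g : ℝ → ℝ} {x y : ℝ}

lemma confidencePotential_zero (g : ℝ → ℝ) : confidencePotential g 0 = 0 :=
  intervalIntegral.integral_same

lemma confidencePotential_sub_le (hg : Monotone g) (x y : ℝ) :
    confidencePotential g y - confidencePotential g x ≤ g y * (y - x) := by
  have hint (a b : ℝ) : IntervalIntegrable g MeasureTheory.volume a b := hg.intervalIntegrable
  have hconst (a b : ℝ) : ∫ _ in a..b, g y = g y * (b - a) := by
    rw [intervalIntegral.integral_const, smul_eq_mul, mul_comm]
  rw [confidencePotential, confidencePotential,
    intervalIntegral.integral_interval_sub_left (hint _ _) (hint _ _)]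
  rcases le_total x y with h | h
  · exact (intervalIntegral.integral_mono_on h (hint _ _) intervalIntegrable_const
      fun s hs ↦ hg hs.2).trans_eq (hconst x y)
  · have := intervalIntegral.integral_mono_on h intervalIntegrable_const (hint _ _)
      fun s hs ↦ hg hs.1
    rw [intervalIntegral.integral_symm]
    linarith [hconst y x]

lemma confidencePotential_nonneg (hg : Monotone g) (hg0 : g 0 = 0) (x : ℝ) :
    0 ≤ confidencePotential g x := by
  have := confidencePotential_sub_le hg x 0
  rw [confidencePotential_zero, hg0] at this
  linarith

lemma roundLoss_le {L k μ : ℝ} (hg : Monotone g) (hμ0 : 0 < μ) (hμ1 : μ ≤ 1) (hL : 0 ≤ L)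
    (hxy : |y - x| ≤ k * μ) (hgxy : |g y - g x| ≤ L * |y - x|) :
    roundLoss g μ x y ≤ k * (k + 1) * L := by
  have hk : 0 ≤ k := nonneg_of_mul_nonneg_left ((abs_nonneg _).trans hxy) hμ0
  have hkμ : k * μ ≤ k := mul_le_of_le_one_right hk hμ1
  have hbregman : confidencePotential g y - confidencePotential g x - g x * (y - x)
      ≤ |g y - g x| * |y - x| := by
    rw [← abs_mul]
    linarith [confidencePotential_sub_le hg x y, le_abs_self ((g y - g x) * (y - x))]
  calc roundLoss g μ x y ≤ |g y - g x| * |y - x| + (1 / μ) * |g y - g x| := by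
        rw [roundLoss, abs_sub_comm (g x)]
        gcongr
    _ = |g y - g x| * (|y - x| + 1 / μ) := by ring
    _ ≤ L * (k * μ) * (k * μ + 1 / μ) := by
        gcongr
        exact hgxy.trans (by gcongr)
    _ = L * ((k * μ) * (k * μ) + k) := by field_simp
    _ ≤ L * (k * k + k) := by gcongr
    _ = k * (k + 1) * L := by ring

end Potential

namespace IsConfidenceFunction

variable {n Z U μ x y : ℝ} {g : ℝ → ℝ}

lemma nonneg (hg : IsConfidenceFunction n Z U g) (x : ℝ) : 0 ≤ g x := by
  rcases le_total x 0 with hx | hx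
  · exact (hg.eq_zero hx).ge
  · exact (hg.eq_zero le_rfl).symm.le.trans (hg.monotone hx)

lemma window_nonneg (hg : IsConfidenceFunction n Z U g) : 0 ≤ U := by
  by_contra! hU
  exact zero_ne_one ((hg.eq_zero hU.le).symm.trans (hg.eq_one le_rfl))

lemma rate_nonneg (hg : IsConfidenceFunction n Z U g) : 0 ≤ Z := by
  have := hg.sub_le (u := -1) (v := 0) (by norm_num)
  rw [hg.eq_zero le_rfl, hg.eq_zero (by norm_num), zero_mul, zero_div] at this
  linarith

lemma slope_nonneg (hg : IsConfidenceFunction n Z U g) (hn : 0 ≤ n) (hx : 0 ≤ x) :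
    0 ≤ Z + x * g x / n := by
  have := hg.rate_nonneg
  have := hg.nonneg x
  positivity

lemma confidencePotential_eq_zero (hg : IsConfidenceFunction n Z U g) (hx : x ≤ 0) :
    confidencePotential g x = 0 := by
  have := confidencePotential_sub_le hg.monotone 0 x
  rw [confidencePotential_zero, hg.eq_zero hx] at this
  linarith [confidencePotential_nonneg hg.monotone (hg.eq_zero le_rfl) x]

lemma sub_le_confidencePotential (hg : IsConfidenceFunction n Z U g) (x : ℝ) :
    x - U ≤ confidencePotential g x := by
  have := confidencePotential_sub_le hg.monotone x U
  rw [hg.eq_one le_rfl] at this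
  linarith [confidencePotential_nonneg hg.monotone (hg.eq_zero le_rfl) U]

lemma slope_le_two_mul_slope (hg : IsConfidenceFunction n Z U g) (hn : 1 ≤ n) (hx0 : 0 ≤ x)
    (hxn : x ≤ n) (hxy : x ≤ y) (hyx : y ≤ x + 1) :
    Z + y * g y / n ≤ 2 * (Z + x * g x / n) := by
  have hy0 : 0 ≤ y := hx0.trans hxy
  have hS := hg.slope_nonneg (by linarith) hy0
  set S := Z + y * g y / n
  have hincr : g y - g x ≤ S / 6 :=
    (hg.sub_le hxy).trans (mul_le_of_le_one_right (by positivity) (by linarith))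
  have hgy : g y ≤ S / 6 * (2 * n) := by
    have := hg.sub_le hy0
    rw [hg.eq_zero le_rfl, sub_zero, sub_zero] at this
    exact this.trans (by gcongr; linarith)
  have hmul : y * g y ≤ x * g x + n * (S / 2) :=
    calc y * g y = x * g x + x * (g y - g x) + (y - x) * g y := by ring
      _ ≤ x * g x + n * (S / 6) + 1 * (S / 6 * (2 * n)) := by
        have := hg.nonneg y
        have := sub_nonneg.2 (hg.monotone hxy)
        gcongr
        linarith
      _ = x * g x + n * (S / 2) := by ring
  have hdiv : y * g y / n ≤ x * g x / n + S / 2 := by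
    rw [div_le_iff₀ (by linarith), add_mul, div_mul_cancel₀ _ (by linarith)]
    linarith
  linarith

lemma roundLoss_le_of_le (hg : IsConfidenceFunction n Z U g) (hn : 0 ≤ n) (hμ0 : 0 < μ)
    (hμ1 : μ ≤ 1) (hx0 : 0 ≤ x) (hyx : y ≤ x) (hxy : x - y ≤ 2 * μ) :
    roundLoss g μ x y ≤ Z + x * g x / n := by
  have hS := hg.slope_nonneg hn hx0
  have habs : |y - x| = x - y := by rw [abs_sub_comm, abs_of_nonneg (sub_nonneg.2 hyx)]
  refine (roundLoss_le hg.monotone hμ0 hμ1 (by positivity : 0 ≤ (Z + x * g x / n) / 6)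
    (habs.trans_le hxy) ?_).trans_eq (by ring)
  rw [habs, abs_sub_comm, abs_of_nonneg (sub_nonneg.2 (hg.monotone hyx))]
  exact hg.sub_le hyx

lemma roundLoss_le_of_ge (hg : IsConfidenceFunction n Z U g) (hn : 1 ≤ n) (hμ0 : 0 < μ)
    (hμ1 : μ ≤ 1) (hx0 : 0 ≤ x) (hxn : x ≤ n) (hxy : x ≤ y) (hyx : y - x ≤ μ) :
    roundLoss g μ x y ≤ Z + x * g x / n := by
  have hSx := hg.slope_nonneg (by linarith) hx0
  have hSy := hg.slope_nonneg (by linarith) (hx0.trans hxy)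
  have habs : |y - x| = y - x := abs_of_nonneg (sub_nonneg.2 hxy)
  have hloss : roundLoss g μ x y ≤ 1 * (1 + 1) * ((Z + y * g y / n) / 6) := by
    refine roundLoss_le hg.monotone hμ0 hμ1 (by positivity) (by linarith) ?_
    rw [habs, abs_of_nonneg (sub_nonneg.2 (hg.monotone hxy))]
    exact hg.sub_le hxy
  linarith [hg.slope_le_two_mul_slope hn hx0 hxn hxy (by linarith)]

lemma roundLoss_le_of_nonpos (hg : IsConfidenceFunction n Z U g) (hn : 1 ≤ n) (hμ0 : 0 < μ)
    (hμ1 : μ ≤ 1) (hx0 : x ≤ 0) (hy : y ≤ μ) : roundLoss g μ x y ≤ Z := by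
  rcases le_total y 0 with hy0 | hy0
  · simpa [roundLoss, hg.confidencePotential_eq_zero, hg.eq_zero, hx0, hy0] using hg.rate_nonneg
  · have hzero : roundLoss g μ x y = roundLoss g μ 0 y := by
      simp [roundLoss, hg.confidencePotential_eq_zero, hg.eq_zero, hx0]
    simpa [hzero] using
      hg.roundLoss_le_of_ge hn hμ0 hμ1 le_rfl (by linarith) hy0 (by linarith)

lemma roundLoss_discount_le {c : ℝ} (hg : IsConfidenceFunction n Z U g) (hn : 1 ≤ n)
    (hμ0 : 0 < μ) (hμ1 : μ ≤ 1) (hx : |x| ≤ n * μ) (hc : |c| ≤ μ) :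
    roundLoss g μ x ((1 - 1 / n) * x + c) ≤ Z + x * g x / n := by
  have hn0 : 0 < n := by linarith
  obtain ⟨hc₁, hc₂⟩ := abs_le.1 hc
  have hdecay : (1 - 1 / n) * x = x - x / n := by ring
  have hxn : x / n ≤ μ := by
    rw [div_le_iff₀' hn0]
    exact (le_abs_self x).trans hx
  rcases le_total x 0 with hx0 | hx0
  · have hρ : 0 ≤ 1 - 1 / n := sub_nonneg.2 ((div_le_one hn0).2 hn)
    have hρx : (1 - 1 / n) * x ≤ 0 := mul_nonpos_of_nonneg_of_nonpos hρ hx0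
    rw [hg.eq_zero hx0, mul_zero, zero_div, add_zero]
    exact hg.roundLoss_le_of_nonpos hn hμ0 hμ1 hx0 (by linarith)
  · rcases le_total ((1 - 1 / n) * x + c) x with h | h
    · exact hg.roundLoss_le_of_le hn0.le hμ0 hμ1 hx0 h (by linarith)
    · have : 0 ≤ x / n := by positivity
      exact hg.roundLoss_le_of_ge hn hμ0 hμ1 hx0 ((div_le_one hn0).1 (hxn.trans hμ1)) h
        (by linarith)

end IsConfidenceFunction

section RetainedBit

/-- The part of the bit `b` that DNP-cu adds to the deviation `x`: all of it, unless `x` is outside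
`[0, U]` and `b` would not push it back, in which case it is discarded. -/
noncomputable def retainedBit (U x b : ℝ) : ℝ :=
  if (0 ≤ x ∧ x ≤ U) ∨ (x < 0 ∧ 0 < b) ∨ (U < x ∧ b < 0) then b else 0

variable {U x b : ℝ}

lemma abs_retainedBit_le (U x b : ℝ) : |retainedBit U x b| ≤ |b| := by
  unfold retainedBit
  split_ifs <;> simp

lemma retainedBit_nonpos_of_lt (hU : 0 ≤ U) (hx : U < x) : retainedBit U x b ≤ 0 := by
  unfold retainedBit
  split_ifs <;> grind

lemma IsConfidenceFunction.mul_retainedBit_add_le {n Z : ℝ} {g : ℝ → ℝ}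
    (hg : IsConfidenceFunction n Z U g) (x b : ℝ) :
    g x * retainedBit U x b + max 0 (b - retainedBit U x b) ≤ g x * b := by
  unfold retainedBit
  split_ifs with h
  · simp
  · push Not at h
    obtain ⟨hwindow, hneg, hlarge⟩ := h
    rcases lt_or_ge x 0 with hx | hx
    · simp [hg.eq_zero hx.le, hneg hx]
    · simp [hg.eq_one (hwindow hx).le, hlarge (hwindow hx)]

end RetainedBit

/-- `x 1, …, x (T + 1)` are the deviations that DNP-cu with discount factor `1 - 1 / n` and window
`[0, U]` produces on the bits `b 1, …, b T`. -/
structure IsDNPTrajectory (n U : ℝ) (T : ℕ) (b x : ℕ → ℝ) : Prop where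
  init : x 1 = 0
  step : ∀ t, 1 ≤ t → t ≤ T → x (t + 1) = (1 - 1 / n) * x t + retainedBit U (x t) (b t)

lemma sum_Icc_sub_of_le_succ {M : Type*} [AddCommGroup M] {m n : ℕ} (h : m ≤ n + 1)
    (f : ℕ → M) : ∑ i ∈ Icc m n, (f (i + 1) - f i) = f (n + 1) - f m := by
  rw [← Ico_add_one_right_eq_Icc, sum_Ico_sub f h]

namespace IsDNPTrajectory

variable {n U μ : ℝ} {T : ℕ} {b x : ℕ → ℝ}

lemma abs_le (hx : IsDNPTrajectory n U T b x) (hn : 1 ≤ n) (hμ : 0 ≤ μ)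
    (hb : ∀ t, 1 ≤ t → t ≤ T → |b t| ≤ μ) {t : ℕ} (h1 : 1 ≤ t) :
    t ≤ T + 1 → |x t| ≤ n * μ := by
  have hρ : 0 ≤ 1 - 1 / n := sub_nonneg.2 ((div_le_one (by linarith)).2 hn)
  induction t, h1 using Nat.le_induction with
  | base => intro _; rw [hx.init, abs_zero]; positivity
  | succ t h1 ih =>
    intro hT
    calc |x (t + 1)| ≤ |(1 - 1 / n) * x t| + |retainedBit U (x t) (b t)| := by
          rw [hx.step t h1 (by lia)]
          exact abs_add_le _ _
      _ ≤ (1 - 1 / n) * (n * μ) + μ := by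
          rw [abs_mul, abs_of_nonneg hρ]
          gcongr
          · exact ih (by lia)
          · exact (abs_retainedBit_le _ _ _).trans (hb t h1 (by lia))
      _ = n * μ := by field_simp; ring

lemma le_window_add (hx : IsDNPTrajectory n U T b x) (hn : 1 ≤ n) (hU : 0 ≤ U) (hμ : 0 ≤ μ)
    (hb : ∀ t, 1 ≤ t → t ≤ T → |b t| ≤ μ) {t : ℕ} (h1 : 1 ≤ t) :
    t ≤ T + 1 → x t ≤ U + μ := by
  have hn0 : 0 < n := by linarith
  have hρ0 : 0 ≤ 1 - 1 / n := sub_nonneg.2 ((div_le_one hn0).2 hn)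
  have hρ1 : 1 - 1 / n ≤ 1 := sub_le_self _ (by positivity)
  induction t, h1 using Nat.le_induction with
  | base => intro _; rw [hx.init]; positivity
  | succ t h1 ih =>
    intro hT
    have hbit : retainedBit U (x t) (b t) ≤ μ :=
      (le_abs_self _).trans ((abs_retainedBit_le _ _ _).trans (hb t h1 (by lia)))
    rw [hx.step t h1 (by lia)]
    rcases le_or_gt (x t) U with hxU | hxU
    · have : (1 - 1 / n) * x t ≤ U :=
        (mul_le_mul_of_nonneg_left hxU hρ0).trans (mul_le_of_le_one_left hU hρ1)
      linarith
    · have : (1 - 1 / n) * x t ≤ x t := mul_le_of_le_one_left (hU.trans hxU.le) hρ1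
      linarith [ih (by lia), retainedBit_nonpos_of_lt (b := b t) hU hxU]

lemma sum_retainedBit_le (hx : IsDNPTrajectory n U T b x) (hn : 1 ≤ n) (hU : 0 ≤ U) (hμ : 0 ≤ μ)
    (hb : ∀ t, 1 ≤ t → t ≤ T → |b t| ≤ μ) :
    ∑ t ∈ Icc 1 T, retainedBit U (x t) (b t) ≤ x (T + 1) + T * (U + μ) / n := by
  calc ∑ t ∈ Icc 1 T, retainedBit U (x t) (b t)
      ≤ ∑ t ∈ Icc 1 T, (x (t + 1) - x t + (U + μ) / n) := by
        refine sum_le_sum fun t ht ↦ ?_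
        obtain ⟨h1, hT⟩ := mem_Icc.1 ht
        have hxn : x t / n ≤ (U + μ) / n := by
          gcongr
          exact hx.le_window_add hn hU hμ hb h1 (by lia)
        have hstep : x (t + 1) = x t - x t / n + retainedBit U (x t) (b t) := by
          rw [hx.step t h1 hT]
          ring
        linarith
    _ = x (T + 1) + T * (U + μ) / n := by
        rw [sum_add_distrib, sum_Icc_sub_of_le_succ (by lia), hx.init, sub_zero, sum_const,
          Nat.card_Icc, nsmul_eq_mul, Nat.add_sub_cancel, mul_div_assoc]

lemma reward_ge {Z : ℝ} {g : ℝ → ℝ} (hx : IsDNPTrajectory n U T b x)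
    (hg : IsConfidenceFunction n Z U g) (hn : 1 ≤ n) (hμ0 : 0 < μ) (hμ1 : μ ≤ 1)
    (hb : ∀ t, 1 ≤ t → t ≤ T → |b t| ≤ μ) {t : ℕ} (h1 : 1 ≤ t) (hT : t ≤ T) :
    confidencePotential g (x (t + 1)) - confidencePotential g (x t)
        + max 0 (b t - retainedBit U (x t) (b t)) - Z
      ≤ g (x t) * b t - (1 / μ) * |g (x t) - g (x (t + 1))| := by
  have hloss : roundLoss g μ (x t) (x (t + 1)) ≤ Z + x t * g (x t) / n := by
    rw [hx.step t h1 hT]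
    exact hg.roundLoss_discount_le hn hμ0 hμ1 (hx.abs_le hn hμ0.le hb h1 (by lia))
      ((abs_retainedBit_le _ _ _).trans (hb t h1 hT))
  have hmove : g (x t) * (x (t + 1) - x t)
      = g (x t) * retainedBit U (x t) (b t) - x t * g (x t) / n := by
    rw [hx.step t h1 hT]
    ring
  rw [roundLoss] at hloss
  linarith [hg.mul_retainedBit_add_le (x t) (b t)]

lemma sum_reward_ge {Z : ℝ} {g : ℝ → ℝ} (hx : IsDNPTrajectory n U T b x)
    (hg : IsConfidenceFunction n Z U g) (hn : 1 ≤ n) (hμ0 : 0 < μ) (hμ1 : μ ≤ 1)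
    (hb : ∀ t, 1 ≤ t → t ≤ T → |b t| ≤ μ) :
    confidencePotential g (x (T + 1)) + ∑ t ∈ Icc 1 T, max 0 (b t - retainedBit U (x t) (b t))
        - Z * T
      ≤ ∑ t ∈ Icc 1 T, (g (x t) * b t - (1 / μ) * |g (x t) - g (x (t + 1))|) := by
  refine le_trans (le_of_eq ?_) (sum_le_sum fun t ht ↦
    hx.reward_ge hg hn hμ0 hμ1 hb (mem_Icc.1 ht).1 (mem_Icc.1 ht).2)
  rw [sum_sub_distrib, sum_add_distrib, sum_Icc_sub_of_le_succ (by lia)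
    fun t ↦ confidencePotential g (x t), hx.init, confidencePotential_zero, sub_zero, sum_const,
    Nat.card_Icc, nsmul_eq_mul, Nat.add_sub_cancel, mul_comm Z]

end IsDNPTrajectory

theorem dnp_cu_reward_lower_bound_from_one_general {n Z U μ : ℝ} {g : ℝ → ℝ} {T : ℕ} {b x : ℕ → ℝ}
    (hn : 1 ≤ n) (hμ0 : 0 < μ) (hμ1 : μ ≤ 1) (hg : IsConfidenceFunction n Z U g)
    (hx : IsDNPTrajectory n U T b x) (hb : ∀ t, 1 ≤ t → t ≤ T → |b t| ≤ μ) :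
    max 0 (∑ t ∈ Icc 1 T, b t - T * (U + μ) / n - U) - Z * T
      ≤ ∑ t ∈ Icc 1 T, (g (x t) * b t - (1 / μ) * |g (x t) - g (x (t + 1))|) := by
  have hreward := hx.sum_reward_ge hg hn hμ0 hμ1 hb
  have hΦ_nonneg := confidencePotential_nonneg hg.monotone (hg.eq_zero le_rfl) (x (T + 1))
  have hΦ_ge := hg.sub_le_confidencePotential (x (T + 1))
  have hretained := hx.sum_retainedBit_le hn hg.window_nonneg hμ0.le hb
  have hdiscarded_nonneg : 0 ≤ ∑ t ∈ Icc 1 T, max 0 (b t - retainedBit U (x t) (b t)) :=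
    sum_nonneg fun _ _ ↦ le_max_left _ _
  have hdiscarded_ge : ∑ t ∈ Icc 1 T, b t - ∑ t ∈ Icc 1 T, retainedBit U (x t) (b t)
      ≤ ∑ t ∈ Icc 1 T, max 0 (b t - retainedBit U (x t) (b t)) := by
    rw [← sum_sub_distrib]
    exact sum_le_sum fun _ _ ↦ le_max_right _ _
  rw [sub_le_iff_le_add]
  exact max_le (by linarith) (by linarith)

/-- **Theorem 1 (second bound): reward lower bound for DNP-cu over intervals starting at 1.** -/
theorem dnp_cu_reward_lower_bound_from_one
    (n Z : ℝ) (hn0 : 0 < n) (hZ0 : 0 < Z) (hZ : Z ≤ 1 / Real.exp 1)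
    (hn : n ≥ max (8 * Real.exp 1) (16 * Real.log (1 / Z)))
    (U : ℝ) (hUpos : 0 < U) (hUdef : gtilde n Z U = 1)
    (hUuniq : ∀ y, 0 < y → gtilde n Z y = 1 → y = U)
    (T : ℕ) (b x : ℕ → ℝ)
    (μ : ℝ) (hμ0 : 0 < μ) (hμ1 : μ ≤ 1)
    (hb : ∀ t, 1 ≤ t → t ≤ T → |b t| ≤ μ)
    (hx1 : x 1 = 0)
    (hxrec : ∀ t, 1 ≤ t → t ≤ T →
      x (t + 1) = if (0 ≤ x t ∧ x t ≤ U) ∨ (x t < 0 ∧ 0 < b t) ∨ (U < x t ∧ b t < 0)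
        then (1 - 1 / n) * x t + b t
        else (1 - 1 / n) * x t)
    (s : ℕ) (hs1 : 1 ≤ s) (hsT : s ≤ T) :
    ∑ t ∈ Finset.Icc 1 s,
        (gconf n Z (x t) * b t - (1 / μ) * |gconf n Z (x t) - gconf n Z (x (t + 1))|)
      ≥ max 0 (∑ t ∈ Finset.Icc 1 s, b t
            - (s : ℝ) * (U + 2 * μ) / n - U)
        - Z * (s : ℝ) := by
  have hn1 : 1 ≤ n := by linarith [(le_max_left _ _).trans hn, Real.exp_one_gt_two]
  have hg := isConfidenceFunction_gconf hn0 hZ0.le hUdef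
  have hx : IsDNPTrajectory n U s b x :=
    ⟨hx1, fun t h1 hs ↦ by rw [hxrec t h1 (hs.trans hsT), retainedBit]; split_ifs <;> ring⟩
  refine le_trans ?_ (dnp_cu_reward_lower_bound_from_one_general hn1 hμ0 hμ1 hg hx
    fun t h1 hs ↦ hb t h1 (hs.trans hsT))
  gcongr
  linarith
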